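/- Let A be a finite-dimensional real affine space over V and let g be a nonzero nondegenerate symmetric bilinear form on V. Then the Cayley–Menger form CM_g is a nondegenerate symmetric bilinear form on the dual space of W_g: the only functional φ on W_g with CM_g(φ, ψ) = 0 for all functionals ψ on W_g is φ = 0. -/

import Mathlib

/-!
Fix a point `O` and a vector `v` with `g v v ≠ 0`, and let `μ = ev_{O+v} + ev_{O-v} - 2 ev_O`.
On a function with Hessian `c • g` the functional `μ` takes the value `c * g v v`, so it kills the
affine functions; hence it is represented by `0` and is `C`-orthogonal to every functional
annihilating `1`. On the other hand, isotropy of the evaluations gives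
`C (ev_{O±v}) ev_O = g v v / 2`, whence `C μ ev_O = g v v ≠ 0`: the functionals `μ` and `ev_O`
pair nontrivially.

Let `φ` be in the radical of `C`. Pairing with `μ` gives `φ 1 = 0`. Hence `φ` is represented by some
`x`, and pairing with `ev_{O+y} - ev_O` gives `g x y = 0` for all `y`, so `x = 0`, i.e. `φ` kills the
affine functions. An element of `W_g` with zero Hessian is affine (`exists_affineMap_of_hessian_zero`),
so `φ` factors through the Hessian coefficient and is proportional to `μ`. Pairing with `ev_O` then
gives `φ = 0`.
-/

/-- A function `δ : A → ℝ` on a real affine space is *quadratic* if for all points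
`P, Q` and all `α, β ∈ ℝ` with `α + β = 1`,
`δ(α·P + β·Q) = α(α−β)·δ(P) + β(β−α)·δ(Q) + 4αβ·δ(midpoint(P,Q))`. -/
def IsQuadraticFn {V A : Type*} [AddCommGroup V] [Module ℝ V] [AddTorsor V A]
    (δ : A → ℝ) : Prop :=
  ∀ (P Q : A) (α β : ℝ), α + β = 1 →
    δ (AffineMap.lineMap P Q β) =
      α * (α - β) * δ P + β * (β - α) * δ Q + 4 * α * β * δ (midpoint ℝ P Q)

/-- `B` is the Hessian of `δ`. -/
def IsHessianOf {V A : Type*} [AddCommGroup V] [Module ℝ V] [AddTorsor V A]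
    (δ : A → ℝ) (B : LinearMap.BilinForm ℝ V) : Prop :=
  ∀ P Q : A, 2 * δ P + 2 * δ Q - 4 * δ (midpoint ℝ P Q) =
    (1/2 : ℝ) * B (Q -ᵥ P) (Q -ᵥ P)

/-- `W_g`: the space of quadratic functions `A → ℝ` whose Hessian is a scalar
multiple of `g`, as a submodule of `A → ℝ`. -/
def Wg {V : Type*} [AddCommGroup V] [Module ℝ V]
    (g : LinearMap.BilinForm ℝ V) (A : Type*) [AddTorsor V A] :
    Submodule ℝ (A → ℝ) where
  carrier := {δ : A → ℝ | IsQuadraticFn δ ∧ ∃ c : ℝ, IsHessianOf δ (c • g)}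
  add_mem' := by
    rintro a b ⟨ha1, ca, ha2⟩ ⟨hb1, cb, hb2⟩
    refine ⟨fun P Q α β h => ?_, ca + cb, fun P Q => ?_⟩
    · have h1 := ha1 P Q α β h
      have h2 := hb1 P Q α β h
      simp only [Pi.add_apply]
      linear_combination h1 + h2
    · have h1 := ha2 P Q
      have h2 := hb2 P Q
      simp only [Pi.add_apply, LinearMap.add_apply, LinearMap.smul_apply,
        smul_eq_mul] at h1 h2 ⊢
      linear_combination h1 + h2
  zero_mem' := by
    refine ⟨fun P Q α β h => ?_, 0, fun P Q => ?_⟩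
    · simp only [Pi.zero_apply]; ring
    · simp only [Pi.zero_apply, zero_smul, LinearMap.zero_apply]; ring
  smul_mem' := by
    rintro c a ⟨ha1, ca, ha2⟩
    refine ⟨fun P Q α β h => ?_, c * ca, fun P Q => ?_⟩
    · have h1 := ha1 P Q α β h
      simp only [Pi.smul_apply, smul_eq_mul]
      linear_combination c * h1
    · have h1 := ha2 P Q
      simp only [Pi.smul_apply, smul_eq_mul, LinearMap.smul_apply] at h1 ⊢
      linear_combination c * h1

/-- The evaluation functional `ev_P : W_g → ℝ` at a point `P`. -/
def evW {V : Type*} [AddCommGroup V] [Module ℝ V]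
    (g : LinearMap.BilinForm ℝ V) {A : Type*} [AddTorsor V A] (P : A) :
    Module.Dual ℝ (Wg g A) where
  toFun δ := (δ : A → ℝ) P
  map_add' x y := rfl
  map_smul' c x := rfl

/-- `φ` annihilates the constant function `1 ∈ W_g`. -/
def AnnihilatesOne {V : Type*} [AddCommGroup V] [Module ℝ V]
    (g : LinearMap.BilinForm ℝ V) {A : Type*} [AddTorsor V A]
    (φ : Module.Dual ℝ (Wg g A)) : Prop :=
  ∀ h1 : (fun _ : A => (1 : ℝ)) ∈ Wg g A, φ ⟨fun _ => (1 : ℝ), h1⟩ = 0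

/-- `x ∈ V` represents the functional `φ` on `W_g`: for every affine function
`f : A → ℝ` (an element of `W_g`), `φ(f) = (linear part of f)(x)`. -/
def Represents {V : Type*} [AddCommGroup V] [Module ℝ V]
    (g : LinearMap.BilinForm ℝ V) {A : Type*} [AddTorsor V A]
    (φ : Module.Dual ℝ (Wg g A)) (x : V) : Prop :=
  ∀ (f : A →ᵃ[ℝ] ℝ) (hf : ⇑f ∈ Wg g A), φ ⟨⇑f, hf⟩ = f.linear x

/-- `C` is a Cayley–Menger form for `g`: a symmetric bilinear form on the dual of
`W_g` such that (i) every evaluation functional `ev_P` is isotropic, and (ii) on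
functionals annihilating the constant `1`, `C(φ, ψ) = −g(x_φ, x_ψ)`. -/
def IsCayleyMenger {V : Type*} [AddCommGroup V] [Module ℝ V]
    (g : LinearMap.BilinForm ℝ V) (A : Type*) [AddTorsor V A]
    (C : LinearMap.BilinForm ℝ (Module.Dual ℝ (Wg g A))) : Prop :=
  (∀ φ ψ, C φ ψ = C ψ φ) ∧
  (∀ P : A, C (evW g P) (evW g P) = 0) ∧
  (∀ (φ ψ : Module.Dual ℝ (Wg g A)) (x y : V),
    AnnihilatesOne g φ → AnnihilatesOne g ψ →
    Represents g φ x → Represents g ψ y → C φ ψ = - g x y)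

theorem affineMap_mem_Wg {V A : Type*} [AddCommGroup V] [Module ℝ V] [AddTorsor V A]
    (g : LinearMap.BilinForm ℝ V) (f : A →ᵃ[ℝ] ℝ) : ⇑f ∈ Wg g A := by
  have hmid : ∀ P Q : A, f (midpoint ℝ P Q) = (f P + f Q) / 2 := by
    intro P Q
    rw [f.map_midpoint, midpoint_eq_smul_add, smul_eq_mul, invOf_eq_inv]
    ring
  refine ⟨fun P Q α β h => ?_, 0, fun P Q => ?_⟩
  · have hα : α = 1 - β := by linarith
    rw [f.apply_lineMap, hmid, AffineMap.lineMap_apply]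
    simp only [vsub_eq_sub, smul_eq_mul, vadd_eq_add]
    subst hα
    ring
  · rw [hmid]
    simp only [zero_smul, LinearMap.zero_apply]
    ring

theorem exists_affineMap_of_hessian_zero {V A : Type*} [AddCommGroup V] [Module ℝ V]
    [AddTorsor V A] (δ : A → ℝ) (hq : IsQuadraticFn δ)
    (hH : IsHessianOf δ (0 : LinearMap.BilinForm ℝ V)) :
    ∃ f : A →ᵃ[ℝ] ℝ, ⇑f = δ := by
  have hmid : ∀ P Q : A, δ (midpoint ℝ P Q) = (δ P + δ Q) / 2 := by
    intro P Q
    have := hH P Q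
    simp only [LinearMap.zero_apply] at this
    linarith
  have hline : ∀ (P Q : A) (t : ℝ), δ (AffineMap.lineMap P Q t) = (1 - t) * δ P + t * δ Q := by
    intro P Q t
    rw [hq P Q (1 - t) t (by ring), hmid]
    ring
  obtain ⟨O⟩ : Nonempty A := inferInstance
  have hsmul : ∀ (t : ℝ) (v : V), δ (t • v +ᵥ O) - δ O = t * (δ (v +ᵥ O) - δ O) := by
    intro t v
    have h := hline O (v +ᵥ O) t
    rw [AffineMap.lineMap_apply, vadd_vsub] at h
    rw [h]
    ring
  have hadd : ∀ v w : V, δ ((v + w) +ᵥ O) - δ O = (δ (v +ᵥ O) - δ O) + (δ (w +ᵥ O) - δ O) := by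
    intro v w
    have h := hmid (v +ᵥ O) (w +ᵥ O)
    have hm : midpoint ℝ (v +ᵥ O) (w +ᵥ O) = (2⁻¹ : ℝ) • (v + w) +ᵥ O := by
      rw [← midpoint_vadd_midpoint, midpoint_self, midpoint_eq_smul_add, invOf_eq_inv]
    have h2 := hsmul 2⁻¹ (v + w)
    rw [hm] at h
    linarith
  let L : V →ₗ[ℝ] ℝ :=
    { toFun := fun v => δ (v +ᵥ O) - δ O
      map_add' := hadd
      map_smul' := fun t v => by simpa using hsmul t v }
  refine ⟨⟨δ, L, fun P v => ?_⟩, rfl⟩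
  have h := hadd v (P -ᵥ O)
  rw [add_vadd, vsub_vadd] at h
  change δ (v +ᵥ P) = (δ (v +ᵥ O) - δ O) + δ P
  linarith

/-- Functionals annihilating `1` are represented by vectors, because `V` is reflexive. -/
theorem exists_represents {V A : Type*} [AddCommGroup V] [Module ℝ V] [AddTorsor V A]
    [FiniteDimensional ℝ V] (g : LinearMap.BilinForm ℝ V) (φ : Module.Dual ℝ (Wg g A))
    (hφ : AnnihilatesOne g φ) : ∃ x : V, Represents g φ x := by
  obtain ⟨O⟩ : Nonempty A := inferInstance
  let F : Module.Dual ℝ V →ₗ[ℝ] Wg g A :=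
    { toFun := fun l => ⟨fun P => l (P -ᵥ O),
        affineMap_mem_Wg g (l.toAffineMap.comp (AffineEquiv.vaddConst ℝ O).symm.toAffineMap)⟩
      map_add' := fun _ _ => rfl
      map_smul' := fun _ _ => rfl }
  obtain ⟨x, hx⟩ := (Module.evalEquiv ℝ V).surjective (φ.comp F)
  refine ⟨x, fun f hf => ?_⟩
  have h1 : (fun _ : A => (1 : ℝ)) ∈ Wg g A := affineMap_mem_Wg g (AffineMap.const ℝ A 1)
  have hdec : (⟨⇑f, hf⟩ : Wg g A) = F f.linear + f O • ⟨fun _ => (1 : ℝ), h1⟩ := by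
    ext P
    change f P = f.linear (P -ᵥ O) + f O * 1
    rw [f.linearMap_vsub, vsub_eq_sub]
    ring
  have h2 := LinearMap.congr_fun hx f.linear
  simp only [Module.evalEquiv_apply, Module.Dual.eval_apply, LinearMap.comp_apply] at h2
  rw [hdec, map_add, map_smul, hφ h1, smul_zero, add_zero, h2]

theorem annihilatesOne_evW_sub {V A : Type*} [AddCommGroup V] [Module ℝ V] [AddTorsor V A]
    (g : LinearMap.BilinForm ℝ V) (P Q : A) : AnnihilatesOne g (evW g P - evW g Q) := by
  intro h1
  change (1 : ℝ) - 1 = 0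
  ring

theorem represents_evW_sub {V A : Type*} [AddCommGroup V] [Module ℝ V] [AddTorsor V A]
    (g : LinearMap.BilinForm ℝ V) (P Q : A) : Represents g (evW g P - evW g Q) (P -ᵥ Q) := by
  intro f hf
  change f P - f Q = f.linear (P -ᵥ Q)
  rw [f.linearMap_vsub, vsub_eq_sub]

/-- The bilinear form `C` recovers half the squared `g`-distance on pairs of points. -/
theorem IsCayleyMenger.evW_evW {V A : Type*} [AddCommGroup V] [Module ℝ V] [AddTorsor V A]
    {g : LinearMap.BilinForm ℝ V} {C : LinearMap.BilinForm ℝ (Module.Dual ℝ (Wg g A))}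
    (hC : IsCayleyMenger g A C) (P Q : A) :
    C (evW g P) (evW g Q) = g (P -ᵥ Q) (P -ᵥ Q) / 2 := by
  obtain ⟨hs, hi, hr⟩ := hC
  have h := hr _ _ _ _ (annihilatesOne_evW_sub g P Q) (annihilatesOne_evW_sub g P Q)
    (represents_evW_sub g P Q) (represents_evW_sub g P Q)
  simp only [map_sub, LinearMap.sub_apply, hi] at h
  rw [hs (evW g Q) (evW g P)] at h
  linarith

theorem exists_apply_self_ne_zero {V : Type*} [AddCommGroup V] [Module ℝ V]
    (g : LinearMap.BilinForm ℝ V) (hgs : ∀ x y, g x y = g y x) (hg0 : g ≠ 0) :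
    ∃ v, g v v ≠ 0 := by
  by_contra! h
  refine hg0 (LinearMap.ext fun x => LinearMap.ext fun y => ?_)
  have h1 := h (x + y)
  simp only [map_add, LinearMap.add_apply, h x, h y, hgs y x] at h1
  simp only [LinearMap.zero_apply]
  linarith

/-- If `g` is a nonzero nondegenerate symmetric bilinear form on
`V`, then its Cayley–Menger form `C = CM_g` is nondegenerate on the dual of `W_g`. -/
theorem stmt18 {V A : Type*} [AddCommGroup V] [Module ℝ V] [AddTorsor V A]
    [FiniteDimensional ℝ V]
    (g : LinearMap.BilinForm ℝ V) (hgs : ∀ x y, g x y = g y x) (hg0 : g ≠ 0)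
    (hgnd : ∀ v : V, (∀ x : V, g v x = 0) → v = 0)
    (C : LinearMap.BilinForm ℝ (Module.Dual ℝ (Wg g A)))
    (hC : IsCayleyMenger g A C) :
    ∀ φ : Module.Dual ℝ (Wg g A),
      (∀ ψ : Module.Dual ℝ (Wg g A), C φ ψ = 0) → φ = 0 := by
  intro φ hφ
  obtain ⟨O⟩ : Nonempty A := inferInstance
  obtain ⟨v, hv⟩ := exists_apply_self_ne_zero g hgs hg0
  have h1 : (fun _ : A => (1 : ℝ)) ∈ Wg g A := affineMap_mem_Wg g (AffineMap.const ℝ A 1)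
  obtain ⟨μ, hμ⟩ : ∃ μ, μ = (evW g (v +ᵥ O) - evW g O) + (evW g (-v +ᵥ O) - evW g O) := ⟨_, rfl⟩
  have hμO : C μ (evW g O) = g v v := by
    rw [hμ]
    simp only [map_add, map_sub, LinearMap.add_apply, LinearMap.sub_apply, hC.evW_evW, vadd_vsub,
      vsub_self, map_neg, LinearMap.neg_apply, map_zero]
    ring
  have hμ1 : AnnihilatesOne g μ := by
    intro h
    rw [hμ, LinearMap.add_apply, annihilatesOne_evW_sub g _ _ h, annihilatesOne_evW_sub g _ _ h,
      add_zero]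
  have hμr : Represents g μ 0 := by
    intro f hf
    rw [hμ, LinearMap.add_apply, represents_evW_sub g _ _ f hf, represents_evW_sub g _ _ f hf]
    simp
  have hμH : ∀ (δ : Wg g A) (c : ℝ), IsHessianOf (δ : A → ℝ) (c • g) → μ δ = c * g v v := by
    intro δ c hc
    have h := hc (-v +ᵥ O) (v +ᵥ O)
    have hm : midpoint ℝ (-v +ᵥ O) (v +ᵥ O) = O := by
      rw [← midpoint_vadd_midpoint, midpoint_self, midpoint_eq_smul_add]
      simp
    rw [hm, vadd_vsub_vadd_cancel_right] at h
    simp only [LinearMap.smul_apply, smul_eq_mul, sub_neg_eq_add, map_add,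
      LinearMap.add_apply] at h
    have hval : μ δ = ((δ : A → ℝ) (v +ᵥ O) - (δ : A → ℝ) O)
        + ((δ : A → ℝ) (-v +ᵥ O) - (δ : A → ℝ) O) := by
      rw [hμ]
      rfl
    rw [hval]
    linarith
  have hφ1 : AnnihilatesOne g φ := by
    intro _
    -- Subtracting `φ 1 • ev_O` leaves a functional annihilating `1`, which is orthogonal to `μ`.
    have hann : AnnihilatesOne g (φ - φ ⟨fun _ => (1 : ℝ), h1⟩ • evW g O) := by
      intro _
      change φ ⟨fun _ => (1 : ℝ), h1⟩ - φ ⟨fun _ => (1 : ℝ), h1⟩ * 1 = 0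
      ring
    obtain ⟨x, hx⟩ := exists_represents g _ hann
    have h := hC.2.2 _ _ _ _ hann hμ1 hx hμr
    simp only [map_sub, map_smul, LinearMap.sub_apply, LinearMap.smul_apply, hφ μ,
      hC.1 (evW g O) μ, hμO, smul_eq_mul, map_zero, neg_zero, zero_sub, neg_eq_zero,
      mul_eq_zero, hv, or_false] at h
    exact h
  obtain ⟨x, hx⟩ := exists_represents g φ hφ1
  have hx0 : x = 0 := by
    refine hgnd x fun y => ?_
    have h := hC.2.2 _ _ _ _ hφ1 (annihilatesOne_evW_sub g (y +ᵥ O) O) hx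
      (represents_evW_sub g (y +ᵥ O) O)
    rw [hφ, vadd_vsub] at h
    linarith
  have hφH : ∀ δ : Wg g A, IsHessianOf (δ : A → ℝ) (0 : LinearMap.BilinForm ℝ V) → φ δ = 0 := by
    rintro ⟨δ, hδ⟩ h0
    obtain ⟨f, rfl⟩ := exists_affineMap_of_hessian_zero δ hδ.1 h0
    rw [hx f hδ, hx0, map_zero]
  by_contra hne
  obtain ⟨δ₀, hδ₀⟩ : ∃ δ, φ δ ≠ 0 := by
    by_contra! h
    exact hne (LinearMap.ext h)
  obtain ⟨c₀, hc₀⟩ := δ₀.2.2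
  have hprop : (c₀ * g v v) • φ = φ δ₀ • μ := by
    ext δ
    obtain ⟨c, hc⟩ := δ.2.2
    have h := hφH (c₀ • δ - c • δ₀) (by
      intro P Q
      have e1 := hc P Q
      have e2 := hc₀ P Q
      simp only [LinearMap.smul_apply, smul_eq_mul] at e1 e2
      simp only [Submodule.coe_sub, Submodule.coe_smul, Pi.sub_apply, Pi.smul_apply, smul_eq_mul,
        LinearMap.zero_apply]
      linear_combination c₀ * e1 - c * e2)
    simp only [map_sub, map_smul, smul_eq_mul] at h
    simp only [LinearMap.smul_apply, smul_eq_mul, hμH δ c hc]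
    linear_combination g v v * h
  have h := congrArg (fun ψ => C ψ (evW g O)) hprop
  simp only [map_smul, LinearMap.smul_apply, hφ, hμO, smul_eq_mul, mul_zero] at h
  exact mul_ne_zero hδ₀ hv h.symm
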